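/- Suppose F is a finite field with |F| = q (so E is finite with |E| = q^m). Let (n,r) ∈ ℕ² with n ≥ r+1. Then the number of (r+1)-dimensional E-subspaces C of E^n that are r-minimal, multiplied by δ_{q^m}(r+1, r+1), equals Σ_{i=mr+1}^{m(r+1)} δ_q(m(r+1), i) · bin_q(n, i). -/

import Mathlib

open Submodule Pointwise

/-- The coordinatewise inclusion of `F^n` into `E^n`. -/
noncomputable def fIncl (F E : Type*) [Field F] [Field E] [Algebra F E] (n : ℕ) :
    (Fin n → F) →ₗ[F] (Fin n → E) :=
  LinearMap.compLeft (Algebra.linearMap F E) (Fin n)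

/-- The rank support `χ(A)` of `A ⊆ E^n`: the smallest `F`-subspace `U` of `F^n`
such that `A` is contained in the `E`-span of (the image in `E^n` of) `U`. -/
noncomputable def rankSupport (F E : Type*) [Field F] [Field E] [Algebra F E] (n : ℕ)
    (A : Set (Fin n → E)) : Submodule F (Fin n → F) :=
  sInf {U : Submodule F (Fin n → F) |
    A ⊆ (Submodule.span E (fIncl F E n '' (U : Set (Fin n → F))) : Set (Fin n → E))}

/-- The rank support weight `wt(A) = dim_F χ(A)`. -/
noncomputable def wt (F E : Type*) [Field F] [Field E] [Algebra F E] (n : ℕ)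
    (A : Set (Fin n → E)) : ℕ :=
  Module.finrank F (rankSupport F E n A)

/-- `D` is rank minimal in `C`: any subcode `B ≤ C` of the same dimension with
`χ(B) ⊆ χ(D)` satisfies `χ(B) = χ(D)`. -/
def RankMinimal (F E : Type*) [Field F] [Field E] [Algebra F E] (n : ℕ)
    (C D : Submodule E (Fin n → E)) : Prop :=
  ∀ B : Submodule E (Fin n → E), B ≤ C → Module.finrank E B = Module.finrank E D →
    rankSupport F E n (B : Set (Fin n → E)) ≤ rankSupport F E n (D : Set (Fin n → E)) →
    rankSupport F E n (B : Set (Fin n → E)) = rankSupport F E n (D : Set (Fin n → E))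

/-- `C` is `r`-minimal with respect to the rank metric. -/
def IsRMinimal (F E : Type*) [Field F] [Field E] [Algebra F E] (n : ℕ)
    (C : Submodule E (Fin n → E)) (r : ℕ) : Prop :=
  ∀ D : Submodule E (Fin n → E), D ≤ C → Module.finrank E D = r → RankMinimal F E n C D

/-- The `a`-binomial coefficient `bin_a(n, r)` (as a real number). -/
noncomputable def qbin (a : ℝ) (n r : ℕ) : ℝ :=
  if r ≤ n then ∏ i ∈ Finset.Icc 1 r, (a ^ (i + n - r) - 1) / (a ^ i - 1) else 0

/-- `δ_a(n, r) = ∏_{i=0}^{r-1} (a^n - a^i)` (as a real number). -/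
noncomputable def qdelta (a : ℝ) (n r : ℕ) : ℝ :=
  ∏ i ∈ Finset.range r, (a ^ n - a ^ i)

/-!
Let `U` be the `F`-span of the coordinate functions of a code `C` in the `E`-dual of `C`.
A functional `φ` on `F^n` annihilates `χ(A)` exactly when its `E`-linear extension vanishes on `A`.
Consequently `dim_F U = wt(C)`, and if `D ⊆ C` is the common zero set of an `E`-space `L` of linear
forms on `C`, then `χ(D)` is governed by `U ∩ L`. When `dim_E C = r + 1`, the `r`-dimensional
subcodes correspond to the lines `L`, and distinct lines meet only in `0`, so `C` is `r`-minimal if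
and only if every line meets `U` nontrivially. This holds if and only if `m r < dim_F U`: a larger
`U` meets every line for dimension reasons, and a smaller one has fewer nonzero vectors than there
are lines.

Transposing generator matrices identifies the bases of the `r`-minimal codes with the `n`-tuples of
vectors of the `m (r + 1)`-dimensional `F`-space `E^(r+1)` whose rank is at least `m r + 1`. Tuples
of rank `i` are counted by their span `W`: in coordinates on `W` they are `i × n` matrices with
independent rows.
-/

section Support

open Module

variable {F E V W : Type*} [Field F] [Field E] [Algebra F E] {n : ℕ}
  [AddCommGroup V] [Module F V] [AddCommGroup W] [Module F W]

/-- A functional `φ` on `F^n`, given by its coefficients, evaluated at a family `g` of vectors of an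
arbitrary `F`-space instead of at scalars: `φ ↦ ∑ j, φ(e_j) • g_j`. For `g ∈ E^n` this is the
`E`-linear extension of `φ`; for the columns of a matrix it is the combination of these columns. -/
noncomputable def dualCombination (g : Fin n → V) : Dual F (Fin n → F) →ₗ[F] V :=
  Fintype.linearCombination F g ∘ₗ ((Pi.basisFun F (Fin n)).constr F).symm.toLinearMap

theorem dualCombination_apply (g : Fin n → V) (φ : Dual F (Fin n → F)) :
    dualCombination g φ = ∑ j, φ (Pi.single j 1) • g j := by
  simp [dualCombination, Fintype.linearCombination_apply, Basis.constr]

theorem range_dualCombination (g : Fin n → V) :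
    LinearMap.range (dualCombination (F := F) g) = span F (Set.range g) := by
  rw [dualCombination, LinearEquiv.range_comp, Fintype.range_linearCombination]

theorem map_dualCombination (f : V →ₗ[F] W) (g : Fin n → V) (φ : Dual F (Fin n → F)) :
    f (dualCombination g φ) = dualCombination (f ∘ g) φ := by
  simp [dualCombination_apply]

theorem dualCombination_self (φ : Dual F (Fin n → F)) (u : Fin n → F) :
    dualCombination u φ = φ u := by
  conv_rhs => rw [← (Pi.basisFun F (Fin n)).sum_repr u]
  simp [dualCombination_apply, mul_comm]

theorem mem_span_image_fIncl_iff (U : Submodule F (Fin n → F)) (a : Fin n → E) :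
    a ∈ span E (fIncl F E n '' (U : Set (Fin n → F))) ↔ ∀ l : Dual F E, l ∘ a ∈ U := by
  constructor
  · intro ha
    induction ha using Submodule.span_induction with
    | mem _ hx =>
      obtain ⟨u, hu, rfl⟩ := hx
      intro l
      have hl : l ∘ fIncl F E n u = l 1 • u := by
        ext j
        simp [fIncl, Algebra.algebraMap_eq_smul_one, mul_comm]
      exact hl ▸ U.smul_mem _ hu
    | zero => simp
    | add x y _ _ hx hy =>
      intro l
      have hl : l ∘ (x + y) = l ∘ x + l ∘ y := by
        ext j
        simp
      exact hl ▸ U.add_mem (hx l) (hy l)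
    | smul e _ _ hx => exact fun l ↦ hx (l ∘ₗ LinearMap.mulLeft F e)
  · intro ha
    classical
    let b := Basis.ofVectorSpace F E
    let s := Finset.univ.biUnion fun j ↦ (b.repr (a j)).support
    have expand : a = ∑ k ∈ s, b k • fIncl F E n (b.coord k ∘ a) := by
      ext j
      have hs : (b.repr (a j)).support ⊆ s :=
        Finset.subset_biUnion_of_mem (fun j ↦ (b.repr (a j)).support) (Finset.mem_univ j)
      conv_lhs => rw [← b.linearCombination_repr (a j), Finsupp.linearCombination_apply,
        Finsupp.sum_of_support_subset _ hs _ (by simp)]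
      simp [fIncl, Algebra.smul_def, mul_comm]
    rw [expand]
    exact sum_mem fun k _ ↦ smul_mem _ _ (subset_span ⟨_, ha _, rfl⟩)

theorem rankSupport_le_iff (A : Set (Fin n → E)) (U : Submodule F (Fin n → F)) :
    rankSupport F E n A ≤ U ↔ ∀ a ∈ A, ∀ l : Dual F E, l ∘ a ∈ U := by
  simp only [← mem_span_image_fIncl_iff]
  refine ⟨fun h a ha ↦ ?_, fun h ↦ sInf_le h⟩
  rw [mem_span_image_fIncl_iff]
  refine fun l ↦ h (mem_sInf.2 fun W hW ↦ ?_)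
  exact (mem_span_image_fIncl_iff W a).1 (hW ha) l

theorem rankSupport_span (A : Set (Fin n → E)) :
    rankSupport F E n (span E A) = rankSupport F E n A := by
  simp only [rankSupport, SetLike.coe_subset_coe, span_le]

theorem mem_dualAnnihilator_rankSupport (A : Set (Fin n → E)) (φ : Dual F (Fin n → F)) :
    φ ∈ (rankSupport F E n A).dualAnnihilator ↔ ∀ a ∈ A, dualCombination a φ = 0 := by
  have le_ker : φ ∈ (rankSupport F E n A).dualAnnihilator ↔
      rankSupport F E n A ≤ LinearMap.ker φ := mem_dualAnnihilator φ
  simp only [le_ker, rankSupport_le_iff, LinearMap.mem_ker, ← dualCombination_self φ,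
    ← map_dualCombination, forall_dual_apply_eq_zero_iff]

theorem finrank_range_of_ker_eq_dualAnnihilator [FiniteDimensional F V] {T : Dual F V →ₗ[F] W}
    {S : Submodule F V} (hT : LinearMap.ker T = S.dualAnnihilator) :
    finrank F (LinearMap.range T) = finrank F S := by
  have rank_nullity := T.finrank_range_add_finrank_ker
  have annihilator := Subspace.finrank_add_finrank_dualAnnihilator_eq S
  rw [hT, Subspace.dual_finrank_eq] at rank_nullity
  lia

theorem wt_eq_finrank_span {A : Set (Fin n → E)} {g : Fin n → V}
    (hg : ∀ φ : Dual F (Fin n → F), dualCombination g φ = 0 ↔ ∀ a ∈ A, dualCombination a φ = 0) :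
    wt F E n A = finrank F (span F (Set.range g)) := by
  rw [← range_dualCombination, wt, finrank_range_of_ker_eq_dualAnnihilator]
  ext φ
  rw [LinearMap.mem_ker, hg, mem_dualAnnihilator_rankSupport]

theorem wt_span_range {ι : Type*} (s : ι → Fin n → E) :
    wt F E n (span E (Set.range s)) = finrank F (span F (Set.range fun j i ↦ s i j)) := by
  rw [wt, rankSupport_span]
  refine wt_eq_finrank_span fun φ ↦ ?_
  rw [Set.forall_mem_range, funext_iff]
  refine forall_congr' fun i ↦ ?_
  have row : dualCombination (fun j i ↦ s i j) φ i = dualCombination (s i) φ :=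
    map_dualCombination (LinearMap.proj (φ := fun _ ↦ E) i) _ φ
  rw [row, Pi.zero_apply]

end Support

section CoordinateForms

open Module

variable {F E : Type*} [Field F] [Field E] [Algebra F E] {n : ℕ}

/-- The coordinate functions of `E^n` restricted to the code `C`: the columns of a generator matrix
of `C`, without choosing a basis of `C`. -/
def coordinateForm (C : Submodule E (Fin n → E)) (j : Fin n) : Dual E C :=
  LinearMap.proj j ∘ₗ C.subtype

/-- The subcode of `C` on which all linear forms in `L` vanish. -/
def vanishingSubcode (C : Submodule E (Fin n → E)) (L : Submodule E (Dual E C)) :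
    Submodule E (Fin n → E) :=
  L.dualCoannihilator.map C.subtype

theorem vanishingSubcode_le (C : Submodule E (Fin n → E)) (L : Submodule E (Dual E C)) :
    vanishingSubcode C L ≤ C :=
  map_subtype_le C _

theorem finrank_add_finrank_vanishingSubcode (C : Submodule E (Fin n → E))
    (L : Submodule E (Dual E C)) :
    finrank E L + finrank E (vanishingSubcode C L) = finrank E C := by
  rw [vanishingSubcode, finrank_map_subtype_eq, Subspace.finrank_add_finrank_dualCoannihilator_eq]

theorem exists_vanishingSubcode_eq {C D : Submodule E (Fin n → E)} (hD : D ≤ C) :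
    ∃ L, vanishingSubcode C L = D :=
  ⟨(D.comap C.subtype).dualAnnihilator, by
    rw [vanishingSubcode, Subspace.dualAnnihilator_dualCoannihilator_eq, map_comap_subtype,
      inf_eq_right.2 hD]⟩

theorem dualCombination_coordinateForm (C : Submodule E (Fin n → E)) (φ : Dual F (Fin n → F))
    (c : C) : dualCombination (coordinateForm C) φ c = dualCombination (c : Fin n → E) φ :=
  map_dualCombination ((LinearMap.applyₗ c).restrictScalars F) _ φ

theorem wt_eq_finrank_span_coordinateForm (C : Submodule E (Fin n → E)) :
    wt F E n C = finrank F (span F (Set.range (coordinateForm C))) := by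
  refine wt_eq_finrank_span fun φ ↦ ?_
  simp only [LinearMap.ext_iff, dualCombination_coordinateForm, LinearMap.zero_apply,
    Subtype.forall, SetLike.mem_coe]

theorem mem_dualAnnihilator_rankSupport_vanishingSubcode (C : Submodule E (Fin n → E))
    (L : Submodule E (Dual E C)) (φ : Dual F (Fin n → F)) :
    φ ∈ (rankSupport F E n (vanishingSubcode C L)).dualAnnihilator ↔
      dualCombination (coordinateForm C) φ ∈ L := by
  rw [mem_dualAnnihilator_rankSupport, ← Subspace.dualCoannihilator_dualAnnihilator_eq (W := L),
    mem_dualAnnihilator]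
  simp [vanishingSubcode, dualCombination_coordinateForm]

theorem rankSupport_vanishingSubcode_le_iff (C : Submodule E (Fin n → E))
    (L L' : Submodule E (Dual E C)) :
    rankSupport F E n (vanishingSubcode C L') ≤ rankSupport F E n (vanishingSubcode C L) ↔
      ∀ f ∈ span F (Set.range (coordinateForm C)), f ∈ L → f ∈ L' := by
  rw [← Subspace.dualAnnihilator_le_dualAnnihilator_iff, SetLike.le_def,
    ← range_dualCombination]
  simp only [mem_dualAnnihilator_rankSupport_vanishingSubcode, LinearMap.mem_range,
    forall_exists_index, forall_apply_eq_imp_iff]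

theorem isRMinimal_iff_forall_vanishingSubcode {C : Submodule E (Fin n → E)} {r k : ℕ}
    (hC : finrank E C = r + k) :
    IsRMinimal F E n C r ↔ ∀ L L' : Submodule E (Dual E C), finrank E L = k → finrank E L' = k →
      rankSupport F E n (vanishingSubcode C L') ≤ rankSupport F E n (vanishingSubcode C L) →
      rankSupport F E n (vanishingSubcode C L') = rankSupport F E n (vanishingSubcode C L) := by
  have finrank_iff (L : Submodule E (Dual E C)) :
      finrank E (vanishingSubcode C L) = r ↔ finrank E L = k := by
    have := finrank_add_finrank_vanishingSubcode C L
    lia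
  constructor
  · intro h L L' hL hL'
    rw [← finrank_iff] at hL hL'
    exact h _ (vanishingSubcode_le C L) hL _ (vanishingSubcode_le C L') (hL'.trans hL.symm)
  · intro h D hD hDr B hB hBD
    rw [hDr] at hBD
    obtain ⟨L, rfl⟩ := exists_vanishingSubcode_eq hD
    obtain ⟨L', rfl⟩ := exists_vanishingSubcode_eq hB
    exact h L L' ((finrank_iff L).1 hDr) ((finrank_iff L').1 hBD)

end CoordinateForms

section Lines

open Module

variable {F E V : Type*} [Field F] [Field E] [Algebra F E] [AddCommGroup V] [Module E V]
  [Module F V] [IsScalarTower F E V]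

theorem finrank_restrictScalars_eq_mul (L : Submodule E V) :
    finrank F (L.restrictScalars F) = finrank F E * finrank E L :=
  (finrank_mul_finrank F E L).symm

theorem not_disjoint_restrictScalars_of_finrank_lt [FiniteDimensional F V] {U : Submodule F V}
    {L : Submodule E V}
    (h : finrank F E * finrank E V < finrank F U + finrank F E * finrank E L) :
    ¬Disjoint U (L.restrictScalars F) := by
  intro disjoint
  have := finrank_add_finrank_le_of_disjoint disjoint
  rw [finrank_restrictScalars_eq_mul, ← finrank_mul_finrank F E V] at this
  lia

theorem eq_of_finrank_eq_one_of_mem {L L' : Submodule E V} (hL : finrank E L = 1)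
    (hL' : finrank E L' = 1) {v : V} (hv : v ≠ 0) (hvL : v ∈ L) (hvL' : v ∈ L') : L = L' := by
  rw [← isAtom_iff_finrank_eq_one] at hL hL'
  by_contra hne
  exact hv (disjoint_def.1 (hL.disjoint_of_ne hL' hne) v hvL hvL')

theorem pow_le_natCard_projectivization [Finite E] {r : ℕ} (hV : finrank E V = r + 1) :
    Nat.card E ^ r ≤ Nat.card (Projectivization E V) := by
  rw [Projectivization.card_of_finrank E V hV]
  exact Finset.single_le_sum (f := (Nat.card E ^ ·)) (fun _ _ ↦ Nat.zero_le _)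
    (Finset.self_mem_range_succ r)

theorem exists_finrank_eq_one_disjoint_restrictScalars [Finite E] {r : ℕ} {U : Submodule F V}
    (hV : finrank E V = r + 1) (hU : finrank F U ≤ finrank F E * r) :
    ∃ L : Submodule E V, finrank E L = 1 ∧ Disjoint U (L.restrictScalars F) := by
  have : FiniteDimensional E V := .of_finrank_pos (by lia)
  have : Finite V := Module.finite_of_finite E
  have : Finite F := .of_injective _ (algebraMap F E).injective
  by_contra! meets
  have meets_line (p : Projectivization E V) : ∃ u : U, (u : V) ∈ p.submodule ∧ u ≠ 0 := by
    have hp := meets p.submodule p.finrank_submodule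
    rw [disjoint_def] at hp
    push Not at hp
    obtain ⟨u, huU, hup, hu⟩ := hp
    exact ⟨⟨u, huU⟩, hup, fun h ↦ hu (congrArg Subtype.val h)⟩
  choose u hu hu0 using meets_line
  have u_injective : Function.Injective u := fun p p' h ↦
    Projectivization.submodule_injective (eq_of_finrank_eq_one_of_mem p.finrank_submodule
      p'.finrank_submodule (by simpa using hu0 p) (hu p) (h ▸ hu p'))
  have := Fintype.ofFinite U
  have := Fintype.ofFinite (Projectivization E V)
  have card_lt : Nat.card (Projectivization E V) < Nat.card U := by
    simpa only [Nat.card_eq_fintype_card] using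
      Fintype.card_lt_of_injective_of_notMem u u_injective (b := 0) (by simpa using hu0)
  refine card_lt.not_ge ?_
  calc Nat.card U = Nat.card F ^ finrank F U := natCard_eq_pow_finrank
    _ ≤ Nat.card F ^ (finrank F E * r) := Nat.pow_le_pow_right Nat.card_pos hU
    _ = Nat.card E ^ r := by rw [natCard_eq_pow_finrank (K := F) (V := E), pow_mul]
    _ ≤ Nat.card (Projectivization E V) := pow_le_natCard_projectivization hV

end Lines

section Minimality

open Module

variable {F E : Type*} [Field F] [Field E] [Algebra F E] [FiniteDimensional F E] {n r : ℕ}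
  {C : Submodule E (Fin n → E)}

theorem wt_le_finrank_mul_finrank (C : Submodule E (Fin n → E)) :
    wt F E n C ≤ finrank F E * finrank E C := by
  have : FiniteDimensional F (Dual E C) := Module.Finite.trans E _
  rw [wt_eq_finrank_span_coordinateForm, ← Subspace.dual_finrank_eq (K := E),
    finrank_mul_finrank]
  exact finrank_le _

theorem isRMinimal_of_lt_wt (hC : finrank E C = r + 1) (hwt : finrank F E * r < wt F E n C) :
    IsRMinimal F E n C r := by
  have : FiniteDimensional F (Dual E C) := Module.Finite.trans E _
  rw [isRMinimal_iff_forall_vanishingSubcode hC]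
  intro L L' hL hL' hle
  rw [rankSupport_vanishingSubcode_le_iff] at hle
  have meets : ¬Disjoint (span F (Set.range (coordinateForm C))) (L.restrictScalars F) := by
    apply not_disjoint_restrictScalars_of_finrank_lt
    rw [Subspace.dual_finrank_eq, hC, hL, ← wt_eq_finrank_span_coordinateForm]
    lia
  rw [disjoint_def] at meets
  push Not at meets
  obtain ⟨f, hfU, hfL, hf⟩ := meets
  rw [eq_of_finrank_eq_one_of_mem hL hL' hf hfL (hle f hfU hfL)]

theorem lt_wt_of_isRMinimal [Finite F] (hC : finrank E C = r + 1) (hmin : IsRMinimal F E n C r) :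
    finrank F E * r < wt F E n C := by
  by_contra! hwt
  have : Finite E := Module.finite_of_finite F
  rw [wt_eq_finrank_span_coordinateForm] at hwt
  obtain ⟨L, hL, disjoint⟩ := exists_finrank_eq_one_disjoint_restrictScalars
    (Subspace.dual_finrank_eq.trans hC) hwt
  rw [disjoint_def] at disjoint
  rw [isRMinimal_iff_forall_vanishingSubcode hC] at hmin
  -- Minimality forces every line, in particular one spanned by a coordinate form, to miss `U` as
  -- `L` does.
  have coordinateForm_eq_zero (j : Fin n) : coordinateForm C j = 0 := by
    by_contra hj
    have hjU : coordinateForm C j ∈ span F (Set.range (coordinateForm C)) :=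
      subset_span ⟨j, rfl⟩
    have eq := hmin L (span E {coordinateForm C j}) hL (finrank_span_singleton hj)
      ((rankSupport_vanishingSubcode_le_iff C _ _).2 fun f hfU hfL ↦
        disjoint f hfU hfL ▸ zero_mem _)
    exact hj (disjoint _ hjU ((rankSupport_vanishingSubcode_le_iff C _ _).1 eq.ge _ hjU
      (mem_span_singleton_self _)))
  have hbot : C = ⊥ := (Submodule.eq_bot_iff C).2 fun c hc ↦
    funext fun j ↦ LinearMap.congr_fun (coordinateForm_eq_zero j) ⟨c, hc⟩
  rw [hbot, finrank_bot] at hC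
  lia

theorem isRMinimal_iff_lt_wt [Finite F] (hC : finrank E C = r + 1) :
    IsRMinimal F E n C r ↔ finrank F E * r < wt F E n C :=
  ⟨lt_wt_of_isRMinimal hC, isRMinimal_of_lt_wt hC⟩

end Minimality

section QCoefficients

theorem qdelta_self_ne_zero {a : ℝ} (ha : 1 < a) (r : ℕ) : qdelta a r r ≠ 0 :=
  Finset.prod_ne_zero_iff.2 fun _ hi ↦
    (sub_pos.2 (pow_lt_pow_right₀ ha (Finset.mem_range.1 hi))).ne'

theorem qdelta_eq_zero_of_lt (a : ℝ) {n r : ℕ} (h : n < r) : qdelta a n r = 0 :=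
  Finset.prod_eq_zero (Finset.mem_range.2 h) (sub_self _)

theorem qbin_eq_qdelta_div_qdelta {a : ℝ} (ha : a ≠ 0) (n r : ℕ) :
    qbin a n r = qdelta a n r / qdelta a r r := by
  unfold qbin
  split_ifs with h
  · rw [qdelta, qdelta, ← Finset.prod_div_distrib, Finset.range_eq_Ico]
    refine Finset.prod_nbij' (r - ·) (r - ·) ?_ ?_ ?_ ?_ ?_ <;>
      simp only [Finset.mem_Icc, Finset.mem_Ico]
    iterate 4 lia
    intro i hi
    have factor (N : ℕ) (hN : r ≤ N) :
        a ^ N - a ^ (r - i) = a ^ (r - i) * (a ^ (i + N - r) - 1) := by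
      rw [mul_sub, ← pow_add, mul_one]
      congr 2
      lia
    rw [factor n h, factor r le_rfl, mul_div_mul_left _ _ (pow_ne_zero _ ha), Nat.add_sub_cancel]
  · rw [qdelta_eq_zero_of_lt a (not_le.1 h), zero_div]

end QCoefficients

section Counting

open Module

variable {K V : Type*} [Field K] [AddCommGroup V] [Module K V]

theorem natCard_linearIndependent [Finite K] [FiniteDimensional K V] (k : ℕ) :
    (Nat.card {s : Fin k → V // LinearIndependent K s} : ℝ) =
      qdelta (Nat.card K) (finrank K V) k := by
  have : Finite V := Module.finite_of_finite K
  have := Fintype.ofFinite K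
  rcases le_or_gt k (finrank K V) with hk | hk
  · rw [card_linearIndependent hk, qdelta, Finset.prod_range, Nat.cast_prod]
    refine Finset.prod_congr rfl fun i _ ↦ ?_
    rw [Nat.cast_sub (Nat.pow_le_pow_right Fintype.card_pos (i.2.le.trans hk)),
      Nat.card_eq_fintype_card, Nat.cast_pow, Nat.cast_pow]
  · have : IsEmpty {s : Fin k → V // LinearIndependent K s} :=
      ⟨fun s ↦ hk.not_ge (by simpa using s.2.fintype_card_le_finrank)⟩
    rw [qdelta_eq_zero_of_lt _ hk, Nat.card_of_isEmpty, Nat.cast_zero]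

theorem span_range_row_eq_top_iff {ι κ : Type*} [Finite ι] [Finite κ] (A : Matrix ι κ K) :
    span K (Set.range A.row) = ⊤ ↔ LinearIndependent K A.col := by
  have := Fintype.ofFinite ι
  have := Fintype.ofFinite κ
  rw [linearIndependent_iff_card_eq_finrank_span, Set.finrank, ← A.rank_eq_finrank_span_cols,
    A.rank_eq_finrank_span_row]
  constructor
  · intro h
    rw [h, finrank_top, finrank_fintype_fun_eq_card]
  · intro h
    exact eq_top_of_finrank_eq (h.symm.trans (finrank_fintype_fun_eq_card K).symm)

theorem natCard_span_range_eq_top [Finite K] (n d : ℕ) :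
    (Nat.card {t : Fin n → Fin d → K // span K (Set.range t) = ⊤} : ℝ) =
      qdelta (Nat.card K) n d := by
  have transpose : {t : Fin n → Fin d → K // span K (Set.range t) = ⊤} ≃
      {s : Fin d → Fin n → K // LinearIndependent K s} :=
    (Equiv.piComm _).subtypeEquiv fun t ↦ span_range_row_eq_top_iff (Matrix.of t)
  rw [Nat.card_congr transpose, natCard_linearIndependent, finrank_fin_fun]

theorem natCard_span_range_eq [Finite K] [FiniteDimensional K V] (n : ℕ) (W : Submodule K V) :
    (Nat.card {g : Fin n → V // span K (Set.range g) = W} : ℝ) =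
      qdelta (Nat.card K) n (finrank K W) := by
  let e : W ≃ₗ[K] (Fin (finrank K W) → K) := (finBasis K W).equivFun
  let f : (Fin (finrank K W) → K) →ₗ[K] V := W.subtype ∘ₗ e.symm.toLinearMap
  have f_injective : Function.Injective f := W.injective_subtype.comp e.symm.injective
  have range_f : LinearMap.range f = W := by
    rw [LinearEquiv.range_comp, range_subtype]
  have span_comp (t : Fin n → Fin (finrank K W) → K) :
      span K (Set.range (f ∘ t)) = W ↔ span K (Set.range t) = ⊤ := by
    rw [Set.range_comp, span_image, ← (map_injective_of_injective f_injective).eq_iff,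
      Submodule.map_top, range_f]
  rw [← natCard_span_range_eq_top]
  refine congrArg Nat.cast (Nat.card_eq_of_bijective
    (fun t : {t : Fin n → Fin (finrank K W) → K // span K (Set.range t) = ⊤} ↦
      (⟨f ∘ t.1, (span_comp t.1).2 t.2⟩ : {g : Fin n → V // span K (Set.range g) = W}))
    ⟨fun t t' h ↦ Subtype.ext (f_injective.comp_left (congrArg Subtype.val h)), ?_⟩).symm
  rintro ⟨g, hg⟩
  have mem_range (i : Fin n) : ∃ x, f x = g i := by
    rw [← LinearMap.mem_range, range_f, ← hg]
    exact subset_span ⟨i, rfl⟩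
  choose t ht using mem_range
  obtain rfl : f ∘ t = g := funext ht
  exact ⟨⟨t, (span_comp t).1 hg⟩, rfl⟩

theorem natCard_families_eq_natCard_subspaces_mul [Finite K] [FiniteDimensional K V] (n k : ℕ)
    (P : Submodule K V → Prop) :
    (Nat.card {g : Fin n → V //
        finrank K (span K (Set.range g)) = k ∧ P (span K (Set.range g))} : ℝ) =
      Nat.card {W : Submodule K V // finrank K W = k ∧ P W} * qdelta (Nat.card K) n k := by
  have : Finite V := Module.finite_of_finite K
  have := Fintype.ofFinite {W : Submodule K V // finrank K W = k ∧ P W}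
  rw [← Nat.card_congr (Equiv.sigmaSubtypeFiberEquivSubtype
      (fun g : Fin n → V ↦ span K (Set.range g))
      (q := fun W ↦ finrank K W = k ∧ P W) fun _ ↦ Iff.rfl),
    Nat.card_sigma, Nat.cast_sum, Nat.card_eq_fintype_card, ← nsmul_eq_mul, ← Finset.card_univ]
  refine Finset.sum_eq_card_nsmul fun W _ ↦ ?_
  rw [natCard_span_range_eq, W.2.1]

theorem natCard_subspaces_mul_qdelta [Finite K] [FiniteDimensional K V] (k : ℕ) :
    Nat.card {W : Submodule K V // finrank K W = k} * qdelta (Nat.card K) k k =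
      qdelta (Nat.card K) (finrank K V) k := by
  have := natCard_families_eq_natCard_subspaces_mul (K := K) (V := V) k k fun _ ↦ True
  simp only [and_true] at this
  rw [← this, ← natCard_linearIndependent]
  simp only [linearIndependent_iff_card_eq_finrank_span, Fintype.card_fin, Set.finrank, eq_comm]

theorem natCard_finrank_span_range_eq [Finite K] [FiniteDimensional K V] (n k : ℕ) :
    (Nat.card {g : Fin n → V // finrank K (span K (Set.range g)) = k} : ℝ) =
      qdelta (Nat.card K) (finrank K V) k * qbin (Nat.card K) n k := by
  have one_lt : (1 : ℝ) < Nat.card K := by exact_mod_cast Finite.one_lt_card (α := K)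
  have := natCard_families_eq_natCard_subspaces_mul (K := K) (V := V) n k fun _ ↦ True
  simp only [and_true] at this
  rw [this, qbin_eq_qdelta_div_qdelta (by positivity), ← natCard_subspaces_mul_qdelta,
    mul_assoc, mul_div_cancel₀ _ (qdelta_self_ne_zero one_lt k)]

theorem natCard_le_finrank_span_range [Finite K] [FiniteDimensional K V] (n k : ℕ) :
    (Nat.card {g : Fin n → V // k ≤ finrank K (span K (Set.range g))} : ℝ) =
      ∑ i ∈ Finset.Icc k (finrank K V),
        qdelta (Nat.card K) (finrank K V) i * qbin (Nat.card K) n i := by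
  have : Finite V := Module.finite_of_finite K
  have mem_Icc (g : Fin n → V) : k ≤ finrank K (span K (Set.range g)) ↔
      finrank K (span K (Set.range g)) ∈ Finset.Icc k (finrank K V) := by
    simp [finrank_le]
  rw [← Nat.card_congr (Equiv.sigmaSubtypeFiberEquivSubtype _ mem_Icc), Nat.card_sigma,
    Nat.cast_sum, ← Finset.sum_coe_sort (Finset.Icc k (finrank K V))]
  exact Finset.sum_congr rfl fun i _ ↦ natCard_finrank_span_range_eq n i.1

end Counting

section Codes

open Module

variable {F E : Type*} [Field F] [Field E] [Algebra F E] [FiniteDimensional F E]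

theorem finrank_eq_and_isRMinimal_iff [Finite F] {n r : ℕ} (s : Fin (r + 1) → Fin n → E) :
    (finrank E (span E (Set.range s)) = r + 1 ∧ IsRMinimal F E n (span E (Set.range s)) r) ↔
      finrank F E * r + 1 ≤ finrank F (span F (Set.range fun j i ↦ s i j)) := by
  rw [← wt_span_range (F := F) s, Nat.add_one_le_iff]
  refine ⟨fun ⟨hs, hmin⟩ ↦ (isRMinimal_iff_lt_wt hs).1 hmin, fun hwt ↦ ?_⟩
  have hlt : r < finrank E (span E (Set.range s)) :=
    Nat.lt_of_mul_lt_mul_left (hwt.trans_le (wt_le_finrank_mul_finrank _))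
  have hle : finrank E (span E (Set.range s)) ≤ r + 1 :=
    (finrank_range_le_card (R := E) s).trans_eq (Fintype.card_fin _)
  have hs := le_antisymm hle hlt
  exact ⟨hs, (isRMinimal_iff_lt_wt hs).2 hwt⟩

end Codes

/-- Proposition 5.3: for a finite field `F` with `|F| = q` and `n ≥ r + 1`, the number of
`[n, r+1]` `r`-minimal codes times `δ_{q^m}(r+1, r+1)` equals
`Σ_{i=mr+1}^{m(r+1)} δ_q(m(r+1), i) · bin_q(n, i)`. -/
theorem statement18 (F E : Type*) [Field F] [Field E] [Algebra F E] [Fintype F]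
    [FiniteDimensional F E] (m : ℕ) (hm : Module.finrank F E = m)
    (q : ℕ) (hq : Fintype.card F = q)
    (n r : ℕ) (hn : r + 1 ≤ n) :
    (Nat.card {C : Submodule E (Fin n → E) //
          Module.finrank E C = r + 1 ∧ IsRMinimal F E n C r} : ℝ) *
        qdelta ((q : ℝ) ^ m) (r + 1) (r + 1) =
      ∑ i ∈ Finset.Icc (m * r + 1) (m * (r + 1)),
        qdelta (q : ℝ) (m * (r + 1)) i * qbin (q : ℝ) n i := by
  subst hm hq
  have : Finite E := Module.finite_of_finite F
  have natCard_E : (Nat.card E : ℝ) = (Fintype.card F : ℝ) ^ Module.finrank F E := by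
    rw [Module.natCard_eq_pow_finrank (K := F), Nat.card_eq_fintype_card, Nat.cast_pow]
  have finrank_V : Module.finrank F (Fin (r + 1) → E) = Module.finrank F E * (r + 1) := by
    rw [Module.finrank_pi_fintype, Fin.sum_const, smul_eq_mul, mul_comm]
  have transpose : {s : Fin (r + 1) → Fin n → E //
        Module.finrank E (span E (Set.range s)) = r + 1 ∧
          IsRMinimal F E n (span E (Set.range s)) r} ≃
      {g : Fin n → Fin (r + 1) → E //
        Module.finrank F E * r + 1 ≤ Module.finrank F (span F (Set.range g))} :=
    (Equiv.piComm _).subtypeEquiv finrank_eq_and_isRMinimal_iff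
  rw [← natCard_E, ← natCard_families_eq_natCard_subspaces_mul (r + 1) (r + 1)
      fun C ↦ IsRMinimal F E n C r,
    Nat.card_congr transpose, ← finrank_V, ← Nat.card_eq_fintype_card]
  exact natCard_le_finrank_span_range n _
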